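/- Discrete fixed point bound. Let ω be an averaging kernel with Δ-discretization ω̂ and (hf, hg) ∈ 𝒳². Suppose there exist lattice functions F, G : {x_i = iΔ} → [0,1], nondecreasing in i, with limits 0 at −∞ and 1 at +∞, satisfying G(x_i) = hg((F ⊗ ω̂)(x_i)) and F(x_i) = hf((G ⊗ ω̂)(x_i)) for all i (a (0,1)-interpolating spatial fixed point of the discrete spatially coupled recursion). Then |A(hf, hg)| ≤ 2Δ‖ω‖∞. -/

import Mathlib

open MeasureTheory Filter Set

noncomputable section

/-- Convolution `(f ⊗ ω)(x) = ∫ y, f y · ω (x − y)`. -/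
def conv (f ω : ℝ → ℝ) (x : ℝ) : ℝ := ∫ y : ℝ, f y * ω (x - y)

/-- `ω` is an averaging kernel: even, nonnegative, of bounded variation, integrating to 1. -/
def IsAveragingKernel (ω : ℝ → ℝ) : Prop :=
  (∀ x, ω (-x) = ω x) ∧ (∀ x, 0 ≤ ω x) ∧ BoundedVariationOn ω Set.univ ∧
    MeasureTheory.Integrable ω ∧ (∫ x : ℝ, ω x) = 1

/-- The essential supremum `‖ω‖∞` of a kernel, as a real number. -/
def kerSup (ω : ℝ → ℝ) : ℝ := (eLpNorm ω ⊤ MeasureTheory.volume).toReal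

/-- `ω` is regular: for some `W ∈ (0,∞]`, it vanishes outside `[−W, W]` and is
positive on `(−W, W)` (the case `W = ∞` being that `ω` is everywhere positive). -/
def IsRegularKernel (ω : ℝ → ℝ) : Prop :=
  (∀ x, 0 < ω x) ∨
    ∃ W : ℝ, 0 < W ∧ (∀ x, W < |x| → ω x = 0) ∧ (∀ x, |x| < W → 0 < ω x)

/-- Membership in `𝒳`: nondecreasing self-maps of `[0,1]`. -/
def MemX (h : ℝ → ℝ) : Prop :=
  MonotoneOn h (Icc 0 1) ∧ MapsTo h (Icc 0 1) (Icc 0 1)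

/-- Left limit `h(u−)` of `h ∈ 𝒳` at `u ∈ [0,1]`, with the convention `h(0−) = 0`. -/
def lm (h : ℝ → ℝ) (u : ℝ) : ℝ := if u ≤ 0 then 0 else sSup (h '' Ico 0 u)

/-- Right limit `h(u+)` of `h ∈ 𝒳` at `u ∈ [0,1]`, with the convention `h(1+) = 1`. -/
def rm (h : ℝ → ℝ) (u : ℝ) : ℝ := if 1 ≤ u then 1 else sInf (h '' Ioc u 1)

/-- A canonical generalized inverse of `h ∈ 𝒳` (any valid inverse has the same integrals,
so the potential below is unambiguous). -/
def Xinv (h : ℝ → ℝ) (v : ℝ) : ℝ := sInf ({1} ∪ {u ∈ Icc (0:ℝ) 1 | v ≤ h u})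

/-- The potential `Φ(hf, hg; u, v) = ∫₀ᵘ hg⁻¹ + ∫₀ᵛ hf⁻¹ − u·v`. -/
def Pot (hf hg : ℝ → ℝ) (u v : ℝ) : ℝ :=
  (∫ x in (0:ℝ)..u, Xinv hg x) + (∫ x in (0:ℝ)..v, Xinv hf x) - u * v

/-- `A(hf, hg) = Φ(hf, hg; 1, 1)`. -/
def Agap (hf hg : ℝ → ℝ) : ℝ := Pot hf hg 1 1

/-- `(u,v)` is a crossing point of `(hf, hg)`:
`u ∈ [hg(v−), hg(v+)]` and `v ∈ [hf(u−), hf(u+)]`. -/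
def IsCrossing (hf hg : ℝ → ℝ) (u v : ℝ) : Prop :=
  u ∈ Icc (0:ℝ) 1 ∧ v ∈ Icc (0:ℝ) 1 ∧
    u ∈ Icc (lm hg v) (rm hg v) ∧ v ∈ Icc (lm hf u) (rm hf u)

/-- The strictly positive gap condition: there is a nontrivial crossing point, and every
nontrivial crossing point satisfies `Φ(hf, hg; u, v) > max {0, A(hf, hg)}`. -/
def StrictPosGap (hf hg : ℝ → ℝ) : Prop :=
  (∃ u v, IsCrossing hf hg u v ∧ ¬(u = 0 ∧ v = 0) ∧ ¬(u = 1 ∧ v = 1)) ∧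
    ∀ u v, IsCrossing hf hg u v → ¬(u = 0 ∧ v = 0) → ¬(u = 1 ∧ v = 1) →
      max 0 (Agap hf hg) < Pot hf hg u v

/-- Membership in `Ψ`: nondecreasing functions `ℝ → [0,1]`. -/
def MemPsi (f : ℝ → ℝ) : Prop := Monotone f ∧ ∀ x, f x ∈ Icc (0:ℝ) 1

/-- `f` is `(a,b)`-interpolating: limits `a` at `−∞` and `b` at `+∞`. -/
def Interpolates (f : ℝ → ℝ) (a b : ℝ) : Prop :=
  Filter.Tendsto f Filter.atBot (nhds a) ∧ Filter.Tendsto f Filter.atTop (nhds b)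

/-- The `Δ`-discretization `ω̂ᵢ = ∫_{(i−1/2)Δ}^{(i+1/2)Δ} ω(z) dz` of a kernel. -/
def dker (ω : ℝ → ℝ) (Δ : ℝ) (i : ℤ) : ℝ :=
  ∫ z in (((i : ℝ) - 1/2) * Δ)..(((i : ℝ) + 1/2) * Δ), ω z

/-- Discrete convolution `(f ⊗ ω̂)(xᵢ) = Σⱼ ω̂_{i−j} f(xⱼ)`. -/
def dconv (f : ℤ → ℝ) (ωh : ℤ → ℝ) (i : ℤ) : ℝ := ∑' j : ℤ, ωh (i - j) * f j

/-!
Write `a = F ⊗ ω̂`, `b = G ⊗ ω̂`, and let `d` be the forward difference. Since `G = hg ∘ a`, the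
integral of `hg⁻¹` over `[0, 1]` lies between the left and right Riemann–Stieltjes sums of `a`
against `dG`, and likewise for `hf`, `b` and `dF`. Summation by parts and the symmetry of `ω̂` show
that the left sum of one pair and the right sum of the other add up to exactly `1`. So `A(hf, hg)`,
up to sign, is at most the gap between the right and left sums of a single pair. That gap is an
average of increments of `a` (or `b`), each of which is at most `sup ω̂ ≤ Δ‖ω‖∞`.
-/

/-- A nondecreasing lattice function with limits `0` at `-∞` and `1` at `+∞`: the discrete analogue
of a `(0,1)`-interpolating function in `Ψ`. -/
structure IsInterpolating (f : ℤ → ℝ) : Prop where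
  mono : Monotone f
  tendsto_atBot : Tendsto f atBot (nhds 0)
  tendsto_atTop : Tendsto f atTop (nhds 1)

/-- A symmetric probability weight on the lattice: the properties of the discretized kernel `ω̂`
that the fixed point bound depends on. -/
structure IsAveragingWeight (w : ℤ → ℝ) : Prop where
  nonneg : ∀ i, 0 ≤ w i
  even : ∀ i, w (-i) = w i
  hasSum : HasSum w 1

/-- The Riemann–Stieltjes sum `∑ pᵢ (gᵢ₊₁ - gᵢ)`, with `p` sampled at left endpoints; it is
the lower bound for `∫ h⁻¹` when `g = h ∘ p`. The junk value is `0` if the series diverges. -/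
def leftSum (p g : ℤ → ℝ) : ℝ := ∑' i, p i * fwdDiff 1 g i

/-- The Riemann–Stieltjes sum `∑ pᵢ₊₁ (gᵢ₊₁ - gᵢ)`, with `p` sampled at right endpoints; it is
the upper bound for `∫ h⁻¹` when `g = h ∘ p`. The junk value is `0` if the series diverges. -/
def rightSum (p g : ℤ → ℝ) : ℝ := ∑' i, p (i + 1) * fwdDiff 1 g i

/-! ### Sums over the integers -/

lemma summable_mul_of_abs_le {ι : Type*} {c u : ι → ℝ} {C : ℝ} (hc : ∀ i, |c i| ≤ C)
    (hu : Summable u) : Summable fun i ↦ c i * u i := by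
  refine Summable.of_norm_bounded (hu.abs.mul_left C) fun i ↦ ?_
  rw [Real.norm_eq_abs, abs_mul]
  exact mul_le_mul_of_nonneg_right (hc i) (abs_nonneg _)

lemma fwdDiff_nonneg {f : ℤ → ℝ} (hf : Monotone f) (i : ℤ) : 0 ≤ fwdDiff 1 f i :=
  sub_nonneg.2 (hf (by lia))

lemma hasSum_fwdDiff_natCast {f : ℤ → ℝ} {b : ℝ} (hf : Monotone f)
    (htop : Tendsto f atTop (nhds b)) : HasSum (fun n : ℕ ↦ fwdDiff 1 f n) (b - f 0) := by
  rw [hasSum_iff_tendsto_nat_of_nonneg fun n ↦ fwdDiff_nonneg hf n]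
  have partial_sum (n : ℕ) : ∑ i ∈ Finset.range n, fwdDiff 1 f i = f n - f 0 := by
    simpa [fwdDiff] using Finset.sum_range_sub (fun k : ℕ ↦ f k) n
  simp_rw [partial_sum]
  exact (htop.comp tendsto_natCast_atTop_atTop).sub_const _

lemma hasSum_fwdDiff_neg_natCast {f : ℤ → ℝ} {a : ℝ} (hf : Monotone f)
    (hbot : Tendsto f atBot (nhds a)) :
    HasSum (fun n : ℕ ↦ fwdDiff 1 f (-(n + 1))) (f 0 - a) := by
  rw [hasSum_iff_tendsto_nat_of_nonneg fun n ↦ fwdDiff_nonneg hf _]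
  have partial_sum (n : ℕ) : ∑ i ∈ Finset.range n, fwdDiff 1 f (-(i + 1)) = f 0 - f (-n) := by
    simpa [fwdDiff] using Finset.sum_range_sub' (fun k : ℕ ↦ f (-k)) n
  simp_rw [partial_sum]
  exact (hbot.comp (tendsto_neg_atTop_atBot.comp tendsto_natCast_atTop_atTop)).const_sub _

lemma hasSum_fwdDiff_of_monotone {f : ℤ → ℝ} {a b : ℝ} (hf : Monotone f)
    (hbot : Tendsto f atBot (nhds a)) (htop : Tendsto f atTop (nhds b)) :
    HasSum (fwdDiff 1 f) (b - a) := by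
  simpa using (hasSum_fwdDiff_natCast hf htop).of_nat_of_neg_add_one
    (hasSum_fwdDiff_neg_natCast hf hbot)

lemma hasSum_intervalIntegral_of_monotone {φ : ℝ → ℝ} {g : ℤ → ℝ} {a b : ℝ}
    (hφ : ∀ x y, IntervalIntegrable φ volume x y) (hφ_nonneg : ∀ x, 0 ≤ φ x) (hg : Monotone g)
    (hbot : Tendsto g atBot (nhds a)) (htop : Tendsto g atTop (nhds b)) :
    HasSum (fun i ↦ ∫ x in g i..g (i + 1), φ x) (∫ x in a..b, φ x) := by
  set primitive : ℝ → ℝ := fun y ↦ ∫ x in (0 : ℝ)..y, φ x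
  have primitive_sub (x y : ℝ) : primitive y - primitive x = ∫ z in x..y, φ z :=
    intervalIntegral.integral_interval_sub_left (hφ _ _) (hφ _ _)
  have primitive_mono : Monotone primitive := fun x y hxy ↦ by
    rw [← sub_nonneg, primitive_sub]
    exact intervalIntegral.integral_nonneg hxy fun z _ ↦ hφ_nonneg z
  have primitive_cont : Continuous primitive := intervalIntegral.continuous_primitive hφ 0
  have telescoped := hasSum_fwdDiff_of_monotone (primitive_mono.comp hg)
    ((primitive_cont.tendsto a).comp hbot) ((primitive_cont.tendsto b).comp htop)
  rw [primitive_sub] at telescoped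
  exact telescoped.congr_fun fun i ↦ (primitive_sub _ _).symm

/-! ### The discretized kernel -/

lemma dker_nonneg {ω : ℝ → ℝ} {Δ : ℝ} (hΔ : 0 ≤ Δ) (hω : ∀ x, 0 ≤ ω x) (i : ℤ) :
    0 ≤ dker ω Δ i :=
  intervalIntegral.integral_nonneg (by nlinarith) fun x _ ↦ hω x

lemma dker_neg {ω : ℝ → ℝ} (hω : ∀ x, ω (-x) = ω x) (Δ : ℝ) (i : ℤ) :
    dker ω Δ (-i) = dker ω Δ i := by
  have reflect := intervalIntegral.integral_comp_neg (a := ((i : ℝ) - 1 / 2) * Δ)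
    (b := ((i : ℝ) + 1 / 2) * Δ) ω
  simp_rw [hω] at reflect
  rw [dker, dker, reflect]
  congr 1 <;> push_cast <;> ring

lemma hasSum_dker {ω : ℝ → ℝ} {Δ : ℝ} (hΔ : 0 < Δ) (hω : Integrable ω) :
    HasSum (dker ω Δ) (∫ x, ω x) := by
  have cells := hasSum_integral_iUnion (fun _ ↦ measurableSet_Ioc)
    (pairwise_disjoint_Ioc_add_zsmul (-(Δ / 2)) Δ) hω.integrableOn
  rw [iUnion_Ioc_add_zsmul hΔ, setIntegral_univ] at cells
  refine cells.congr_fun fun i ↦ ?_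
  rw [dker, intervalIntegral.integral_of_le (by nlinarith)]
  congr 3 <;> simp only [zsmul_eq_mul] <;> push_cast <;> ring

lemma memLp_top_of_boundedVariationOn_univ {ω : ℝ → ℝ} (hω : BoundedVariationOn ω univ) :
    MemLp ω ⊤ volume := by
  obtain ⟨p, q, hp, hq, rfl⟩ := hω.locallyBoundedVariationOn.exists_monotoneOn_sub_monotoneOn
  have meas : Measurable (p - q) :=
    (monotoneOn_univ.1 hp).measurable.sub (monotoneOn_univ.1 hq).measurable
  refine memLp_top_of_bound meas.aestronglyMeasurable
    (‖(p - q) 0‖ + (eVariationOn (p - q) univ).toReal) (.of_forall fun x ↦ ?_)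
  have dist_le := hω.dist_le (mem_univ x) (mem_univ 0)
  rw [dist_eq_norm] at dist_le
  linarith [norm_sub_norm_le ((p - q) x) ((p - q) 0)]

lemma kerSup_nonneg (ω : ℝ → ℝ) : 0 ≤ kerSup ω :=
  ENNReal.toReal_nonneg

lemma ae_norm_le_kerSup {ω : ℝ → ℝ} (hω : MemLp ω ⊤ volume) : ∀ᵐ x, ‖ω x‖ ≤ kerSup ω := by
  simpa only [kerSup, toReal_eLpNorm hω.aestronglyMeasurable] using ae_le_lpNorm_exponent_top hω

lemma dker_le {ω : ℝ → ℝ} {Δ : ℝ} (hΔ : 0 ≤ Δ) (hω : MemLp ω ⊤ volume) (i : ℤ) :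
    dker ω Δ i ≤ Δ * kerSup ω := by
  have cell_length : ((i : ℝ) + 1 / 2) * Δ - ((i : ℝ) - 1 / 2) * Δ = Δ := by ring
  calc dker ω Δ i ≤ ‖dker ω Δ i‖ := Real.le_norm_self _
    _ ≤ kerSup ω * |((i : ℝ) + 1 / 2) * Δ - ((i : ℝ) - 1 / 2) * Δ| :=
      intervalIntegral.norm_integral_le_of_norm_le_const_ae
        ((ae_norm_le_kerSup hω).mono fun x hx _ ↦ hx)
    _ = Δ * kerSup ω := by rw [cell_length, abs_of_nonneg hΔ, mul_comm]

lemma isAveragingWeight_dker {ω : ℝ → ℝ} {Δ : ℝ} (hΔ : 0 < Δ) (hω : IsAveragingKernel ω) :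
    IsAveragingWeight (dker ω Δ) := by
  obtain ⟨even, nonneg, -, integrable, integral_eq⟩ := hω
  exact ⟨dker_nonneg hΔ.le nonneg, dker_neg even Δ, integral_eq ▸ hasSum_dker hΔ integrable⟩

/-! ### Discrete convolution -/

section Convolution

variable {w f : ℤ → ℝ} {C : ℝ}

lemma dconv_eq_tsum_sub (f w : ℤ → ℝ) (i : ℤ) : dconv f w i = ∑' j, w j * f (i - j) := by
  rw [dconv, ← (Equiv.subLeft i).tsum_eq]
  simp

lemma summable_weight_mul_sub (hw : Summable w) (hf : ∀ i, |f i| ≤ C) (i : ℤ) :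
    Summable fun j ↦ w j * f (i - j) := by
  simpa only [mul_comm] using summable_mul_of_abs_le (fun j ↦ hf (i - j)) hw

lemma dconv_comp_add (f w : ℤ → ℝ) (k i : ℤ) :
    dconv (fun j ↦ f (j + k)) w i = dconv f w (i + k) := by
  simp only [dconv_eq_tsum_sub, sub_add_eq_add_sub]

lemma fwdDiff_dconv (hw : Summable w) (hf : ∀ i, |f i| ≤ C) (k : ℤ) :
    fwdDiff k (dconv f w) = dconv (fwdDiff k f) w := by
  funext i
  rw [fwdDiff, ← dconv_comp_add, dconv_eq_tsum_sub, dconv_eq_tsum_sub, dconv_eq_tsum_sub,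
    ← (summable_weight_mul_sub hw (fun j ↦ hf (j + k)) i).tsum_sub
      (summable_weight_mul_sub hw hf i)]
  simp only [fwdDiff, mul_sub]

lemma dconv_monotone (hw : Summable w) (hw_nonneg : ∀ i, 0 ≤ w i) (hf : ∀ i, |f i| ≤ C)
    (hf_mono : Monotone f) : Monotone (dconv f w) := fun i j hij ↦ by
  rw [dconv_eq_tsum_sub, dconv_eq_tsum_sub]
  exact (summable_weight_mul_sub hw hf i).tsum_le_tsum
    (fun k ↦ mul_le_mul_of_nonneg_left (hf_mono (by lia)) (hw_nonneg k))
    (summable_weight_mul_sub hw hf j)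

lemma dconv_le_mul_tsum (hw : ∀ i, |w i| ≤ C) (hf : Summable f) (hf_nonneg : ∀ i, 0 ≤ f i)
    (i : ℤ) : dconv f w i ≤ C * ∑' j, f j := by
  rw [dconv, ← tsum_mul_left]
  exact (summable_mul_of_abs_le (fun j ↦ hw (i - j)) hf).tsum_le_tsum
    (fun j ↦ mul_le_mul_of_nonneg_right (le_of_abs_le (hw (i - j))) (hf_nonneg j)) (hf.mul_left C)

lemma tendsto_dconv {l : Filter ℤ} {c : ℝ} (hw : Summable w) (hf : ∀ i, |f i| ≤ C)
    (hl : ∀ k, Tendsto (fun i ↦ i - k) l l) (hfl : Tendsto f l (nhds c)) :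
    Tendsto (dconv f w) l (nhds ((∑' i, w i) * c)) := by
  rw [funext (dconv_eq_tsum_sub f w), ← tsum_mul_right]
  refine tendsto_tsum_of_dominated_convergence (hw.abs.mul_right C)
    (fun j ↦ (hfl.comp (hl j)).const_mul (w j)) (.of_forall fun i j ↦ ?_)
  rw [Real.norm_eq_abs, abs_mul]
  exact mul_le_mul_of_nonneg_left (hf _) (abs_nonneg _)

lemma tsum_mul_dconv_comm {u v : ℤ → ℝ} (hw : Summable w) (hw_even : ∀ i, w (-i) = w i)
    (hu : ∀ i, |u i| ≤ C) (hv : Summable v) :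
    ∑' i, u i * dconv v w i = ∑' i, dconv u w i * v i := by
  have summable_kernel : Summable fun ij : ℤ × ℤ ↦ w (ij.1 - ij.2) * v ij.2 :=
    (summable_mul_of_summable_norm hw.norm hv.norm).comp_injective
      (i := fun ij : ℤ × ℤ ↦ (ij.1 - ij.2, ij.2)) fun _ _ h ↦ by grind
  have summable_double : Summable (Function.uncurry fun i j ↦ u i * (w (i - j) * v j)) :=
    summable_mul_of_abs_le (fun ij : ℤ × ℤ ↦ hu ij.1) summable_kernel
  calc ∑' i, u i * dconv v w i
      = ∑' i, ∑' j, u i * (w (i - j) * v j) := by simp only [dconv, tsum_mul_left]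
    _ = ∑' j, ∑' i, u i * (w (i - j) * v j) := summable_double.tsum_comm.symm
    _ = ∑' j, ∑' i, w (j - i) * u i * v j := by
      refine tsum_congr fun j ↦ tsum_congr fun i ↦ ?_
      rw [← hw_even (i - j), neg_sub]
      ring
    _ = ∑' j, dconv u w j * v j := by simp only [dconv, tsum_mul_right]

end Convolution

/-! ### Interpolating lattice functions -/

namespace IsInterpolating

variable {f g p w : ℤ → ℝ} {C M : ℝ}

lemma mem_Icc (hf : IsInterpolating f) (i : ℤ) : f i ∈ Icc (0 : ℝ) 1 :=
  ⟨hf.mono.le_of_tendsto hf.tendsto_atBot i, hf.mono.ge_of_tendsto hf.tendsto_atTop i⟩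

lemma abs_le_one (hf : IsInterpolating f) (i : ℤ) : |f i| ≤ 1 :=
  abs_le.2 ⟨by linarith [(hf.mem_Icc i).1], (hf.mem_Icc i).2⟩

lemma hasSum_fwdDiff (hf : IsInterpolating f) : HasSum (fwdDiff 1 f) 1 := by
  simpa using hasSum_fwdDiff_of_monotone hf.mono hf.tendsto_atBot hf.tendsto_atTop

protected lemma mul (hf : IsInterpolating f) (hg : IsInterpolating g) :
    IsInterpolating fun i ↦ f i * g i where
  mono i j hij := mul_le_mul (hf.mono hij) (hg.mono hij) (hg.mem_Icc i).1 (hf.mem_Icc j).1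
  tendsto_atBot := by simpa using hf.tendsto_atBot.mul hg.tendsto_atBot
  tendsto_atTop := by simpa using hf.tendsto_atTop.mul hg.tendsto_atTop

protected lemma dconv (hf : IsInterpolating f) (hw : IsAveragingWeight w) :
    IsInterpolating (dconv f w) where
  mono := dconv_monotone hw.hasSum.summable hw.nonneg hf.abs_le_one hf.mono
  tendsto_atBot := by
    simpa using tendsto_dconv hw.hasSum.summable hf.abs_le_one
      (fun k ↦ tendsto_atBot_add_const_right _ (-k) tendsto_id) hf.tendsto_atBot
  tendsto_atTop := by
    simpa [hw.hasSum.tsum_eq] using tendsto_dconv hw.hasSum.summable hf.abs_le_one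
      (fun k ↦ tendsto_atTop_add_const_right _ (-k) tendsto_id) hf.tendsto_atTop

lemma fwdDiff_dconv_le (hf : IsInterpolating f) (hw : IsAveragingWeight w) (hwM : ∀ i, w i ≤ M)
    (i : ℤ) : fwdDiff 1 (dconv f w) i ≤ M := by
  have abs_w_le (j : ℤ) : |w j| ≤ M := (abs_of_nonneg (hw.nonneg j)).trans_le (hwM j)
  rw [fwdDiff_dconv hw.hasSum.summable hf.abs_le_one]
  simpa [hf.hasSum_fwdDiff.tsum_eq] using
    dconv_le_mul_tsum abs_w_le hf.hasSum_fwdDiff.summable (fwdDiff_nonneg hf.mono) i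

lemma summable_mul_fwdDiff (hg : IsInterpolating g) (hp : ∀ i, |p i| ≤ C) :
    Summable fun i ↦ p i * fwdDiff 1 g i :=
  summable_mul_of_abs_le hp hg.hasSum_fwdDiff.summable

lemma rightSum_sub_leftSum_le (hg : IsInterpolating g) (hp : ∀ i, |p i| ≤ C)
    (hpM : ∀ i, fwdDiff 1 p i ≤ M) : rightSum p g - leftSum p g ≤ M := by
  have gap := (hg.summable_mul_fwdDiff fun i ↦ hp (i + 1)).hasSum.sub
    (hg.summable_mul_fwdDiff hp).hasSum
  have bound := hg.hasSum_fwdDiff.mul_left M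
  rw [mul_one] at bound
  refine hasSum_le (fun i ↦ ?_) gap bound
  rw [← sub_mul]
  exact mul_le_mul_of_nonneg_right (hpM i) (fwdDiff_nonneg hg.mono i)

lemma leftSum_add_rightSum_swap (hp : IsInterpolating p) (hg : IsInterpolating g) :
    leftSum p g + rightSum g p = 1 := by
  rw [leftSum, rightSum, ← (hg.summable_mul_fwdDiff hp.abs_le_one).tsum_add
    (hp.summable_mul_fwdDiff fun i ↦ hg.abs_le_one (i + 1)), ← (hp.mul hg).hasSum_fwdDiff.tsum_eq]
  refine tsum_congr fun i ↦ ?_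
  simp only [fwdDiff]
  ring

lemma rightSum_dconv (hf : IsInterpolating f) (hg : IsInterpolating g)
    (hw : IsAveragingWeight w) :
    rightSum g (dconv f w) = rightSum (dconv g w) f := by
  simp only [rightSum, fwdDiff_dconv hw.hasSum.summable hf.abs_le_one, ← dconv_comp_add g w 1]
  exact tsum_mul_dconv_comm hw.hasSum.summable hw.even (fun i ↦ hg.abs_le_one (i + 1))
    hf.hasSum_fwdDiff.summable

lemma leftSum_dconv_add_rightSum_dconv (hf : IsInterpolating f) (hg : IsInterpolating g)
    (hw : IsAveragingWeight w) :
    leftSum (dconv f w) g + rightSum (dconv g w) f = 1 := by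
  rw [← hf.rightSum_dconv hg hw]
  exact (hf.dconv hw).leftSum_add_rightSum_swap hg

end IsInterpolating

/-! ### The generalized inverse -/

section GeneralizedInverse

variable {h : ℝ → ℝ} {u v : ℝ}

lemma Xinv_nonneg (h : ℝ → ℝ) (v : ℝ) : 0 ≤ Xinv h v := by
  refine Real.sInf_nonneg ?_
  rintro u (rfl | hu)
  exacts [zero_le_one, hu.1.1]

lemma bddBelow_Xinv_set (h : ℝ → ℝ) (v : ℝ) :
    BddBelow ({1} ∪ {u ∈ Icc (0 : ℝ) 1 | v ≤ h u}) :=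
  bddBelow_singleton.union (bddBelow_Icc.mono (sep_subset _ _))

lemma Xinv_monotone (h : ℝ → ℝ) : Monotone (Xinv h) := fun v _ hvw ↦
  csInf_le_csInf (bddBelow_Xinv_set h v) ⟨1, .inl rfl⟩
    (union_subset_union_right _ fun _ hu ↦ ⟨hu.1, hvw.trans hu.2⟩)

lemma Xinv_le (hu : u ∈ Icc (0 : ℝ) 1) (hv : v ≤ h u) : Xinv h v ≤ u :=
  csInf_le (bddBelow_Xinv_set h v) (.inr ⟨hu, hv⟩)

lemma le_Xinv (hh : MonotoneOn h (Icc 0 1)) (hu : u ∈ Icc (0 : ℝ) 1) (hv : h u < v) :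
    u ≤ Xinv h v := by
  refine le_csInf ⟨1, .inl rfl⟩ ?_
  rintro x (rfl | hx)
  · exact hu.2
  · by_contra! hxu
    exact (hv.trans_le hx.2).not_ge (hh hx.1 hu hxu.le)

lemma integral_Xinv_mem_Icc (hh : MonotoneOn h (Icc 0 1)) (hu : u ∈ Icc (0 : ℝ) 1)
    (hv : v ∈ Icc (0 : ℝ) 1) (huv : u ≤ v) :
    ∫ x in h u..h v, Xinv h x ∈ Icc (u * (h v - h u)) (v * (h v - h u)) := by
  have integrable : IntervalIntegrable (Xinv h) volume (h u) (h v) :=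
    (Xinv_monotone h).intervalIntegrable
  have integral_const (c : ℝ) : ∫ _ in h u..h v, c = c * (h v - h u) := by
    rw [intervalIntegral.integral_const, smul_eq_mul, mul_comm]
  rw [← integral_const, ← integral_const]
  exact ⟨intervalIntegral.integral_mono_on_of_le_Ioo (hh hu hv huv) intervalIntegrable_const
      integrable fun x hx ↦ le_Xinv hh hu hx.1,
    intervalIntegral.integral_mono_on_of_le_Ioo (hh hu hv huv) integrable
      intervalIntegrable_const fun x hx ↦ Xinv_le hv hx.2.le⟩

lemma integral_Xinv_mem_Icc_leftSum_rightSum {p g : ℤ → ℝ} (hh : MonotoneOn h (Icc 0 1))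
    (hp : IsInterpolating p) (hg : IsInterpolating g) (hgp : ∀ i, g i = h (p i)) :
    ∫ x in (0 : ℝ)..1, Xinv h x ∈ Icc (leftSum p g) (rightSum p g) := by
  have cells : HasSum (fun i ↦ ∫ x in g i..g (i + 1), Xinv h x) (∫ x in (0 : ℝ)..1, Xinv h x) :=
    hasSum_intervalIntegral_of_monotone (fun _ _ ↦ (Xinv_monotone h).intervalIntegrable)
      (Xinv_nonneg h) hg.mono hg.tendsto_atBot hg.tendsto_atTop
  have cell_bounds (i : ℤ) : ∫ x in g i..g (i + 1), Xinv h x ∈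
      Icc (p i * fwdDiff 1 g i) (p (i + 1) * fwdDiff 1 g i) := by
    simpa only [fwdDiff, hgp] using
      integral_Xinv_mem_Icc hh (hp.mem_Icc i) (hp.mem_Icc (i + 1)) (hp.mono (by lia))
  exact ⟨hasSum_le (fun i ↦ (cell_bounds i).1) (hg.summable_mul_fwdDiff hp.abs_le_one).hasSum cells,
    hasSum_le (fun i ↦ (cell_bounds i).2) cells
      (hg.summable_mul_fwdDiff fun i ↦ hp.abs_le_one (i + 1)).hasSum⟩

end GeneralizedInverse

theorem discrete_fixed_point_bound_general {hf hg : ℝ → ℝ} {w F G : ℤ → ℝ} {M : ℝ}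
    (hhf : MonotoneOn hf (Icc 0 1)) (hhg : MonotoneOn hg (Icc 0 1))
    (hw : IsAveragingWeight w) (hwM : ∀ i, w i ≤ M)
    (hF : IsInterpolating F) (hG : IsInterpolating G)
    (hfixG : ∀ i, G i = hg (dconv F w i)) (hfixF : ∀ i, F i = hf (dconv G w i)) :
    |Agap hf hg| ≤ M := by
  have ha := hF.dconv hw
  have hb := hG.dconv hw
  obtain ⟨left_le_hg, hg_le_right⟩ := integral_Xinv_mem_Icc_leftSum_rightSum hhg ha hG hfixG
  obtain ⟨left_le_hf, hf_le_right⟩ := integral_Xinv_mem_Icc_leftSum_rightSum hhf hb hF hfixF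
  have duality := hF.leftSum_dconv_add_rightSum_dconv hG hw
  have gap_G := hG.rightSum_sub_leftSum_le ha.abs_le_one (hF.fwdDiff_dconv_le hw hwM)
  have gap_F := hF.rightSum_sub_leftSum_le hb.abs_le_one (hG.fwdDiff_dconv_le hw hwM)
  rw [Agap, Pot, abs_le]
  constructor <;> linarith

/-- **Discrete fixed point bound.** -/
theorem discrete_fixed_point_bound
    (ω hf hg : ℝ → ℝ) (Δ : ℝ) (hΔ : 0 < Δ)
    (hω : IsAveragingKernel ω) (hhf : MemX hf) (hhg : MemX hg)
    (F G : ℤ → ℝ) (hFmono : Monotone F) (hGmono : Monotone G)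
    (hFrange : ∀ i, F i ∈ Icc (0:ℝ) 1) (hGrange : ∀ i, G i ∈ Icc (0:ℝ) 1)
    (hFbot : Filter.Tendsto F Filter.atBot (nhds 0))
    (hFtop : Filter.Tendsto F Filter.atTop (nhds 1))
    (hGbot : Filter.Tendsto G Filter.atBot (nhds 0))
    (hGtop : Filter.Tendsto G Filter.atTop (nhds 1))
    (hfixG : ∀ i, G i = hg (dconv F (dker ω Δ) i))
    (hfixF : ∀ i, F i = hf (dconv G (dker ω Δ) i)) :
    |Agap hf hg| ≤ 2 * Δ * kerSup ω := by
  have sharp_bound : |Agap hf hg| ≤ Δ * kerSup ω :=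
    discrete_fixed_point_bound_general hhf.1 hhg.1 (isAveragingWeight_dker hΔ hω)
      (dker_le hΔ.le (memLp_top_of_boundedVariationOn_univ hω.2.2.1))
      ⟨hFmono, hFbot, hFtop⟩ ⟨hGmono, hGbot, hGtop⟩ hfixG hfixF
  linarith [mul_nonneg hΔ.le (kerSup_nonneg ω)]
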